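/- arXiv:2512.06273 — 2 statements merged into one kernel-verified Lean document; each statement's English description precedes it below -/
import Mathlib

section
/- Σ_{w ∈ Sₙ, w² = id} x^{des(w)} = Σ_{λ ⊢ n} Sk_λ(x), the sum over partitions λ of n of the skeleton polynomials. -/
/-- A standard Young tableau with `n` boxes, encoded by the positions
`pos 0, …, pos (n-1)` of the entries `1, …, n` (rows and columns 0-indexed,
coordinates `(row, column)`).  The conditions say: the positions are distinct, their
set is a Young diagram (down-closed), and entries increase along rows and columns. -/
def IsSYT (n : ℕ) (pos : Fin n → Fin n × Fin n) : Prop :=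
  Function.Injective pos ∧
  (∀ (i : Fin n) (a b : Fin n), a ≤ (pos i).1 → b ≤ (pos i).2 → ∃ j, pos j = (a, b)) ∧
  (∀ i j : Fin n,
    (((pos i).1 = (pos j).1 ∧ (pos i).2 < (pos j).2) ∨
     ((pos i).2 = (pos j).2 ∧ (pos i).1 < (pos j).1)) → i < j)

instance (n : ℕ) : DecidablePred (IsSYT n) := fun _ => by
  unfold IsSYT; infer_instance

/-- The type of standard Young tableaux with `n` boxes. -/
abbrev SYT (n : ℕ) := {pos : Fin n → Fin n × Fin n // IsSYT n pos}

/-- The length of row `r` of `T`. -/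
def rowLen (n : ℕ) (T : SYT n) (r : Fin n) : ℕ :=
  (Finset.univ.filter fun i => (T.1 i).1 = r).card

/-- The multiset of (nonzero) row lengths of `T`: its shape as a partition. -/
def rowMult (n : ℕ) (T : SYT n) : Multiset ℕ :=
  ((Finset.univ : Finset (Fin n)).val.map (rowLen n T)).filter (fun x => 0 < x)

/-- The descent set of `T` as a subset of `Fin (n-1)`: `i` records the 1-based
descent `i+1`, i.e. entry `i+2` lies in a strictly lower row than entry `i+1`. -/
def desSet (n : ℕ) (T : SYT n) : Finset (Fin (n - 1)) :=
  Finset.univ.filter fun i =>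
    (T.1 ⟨(i : ℕ), by have := i.isLt; omega⟩).1 <
      (T.1 ⟨(i : ℕ) + 1, by have := i.isLt; omega⟩).1

/-- The descent composition of `T`: the composition of `n` whose partial sums are the
elements of the descent set of `T`. -/
def desComp (n : ℕ) (T : SYT n) : Composition n :=
  ((compositionAsSetEquiv n).symm (desSet n T)).toComposition

/-- The descent set of a permutation, as a subset of `Fin (n-1)`. -/
def permDesSet (n : ℕ) (w : Equiv.Perm (Fin n)) : Finset (Fin (n - 1)) :=
  Finset.univ.filter fun i =>
    w ⟨(i : ℕ) + 1, by have := i.isLt; omega⟩ < w ⟨(i : ℕ), by have := i.isLt; omega⟩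

/-- The descent composition of a permutation. -/
def permDesComp (n : ℕ) (w : Equiv.Perm (Fin n)) : Composition n :=
  ((compositionAsSetEquiv n).symm (permDesSet n w)).toComposition

/-- The exponent vector of the monomial `x^α = x₁^{α₁}⋯x_l^{α_l}`. -/
noncomputable def expOf (n : ℕ) (α : Composition n) : Fin n →₀ ℕ :=
  ∑ i : Fin α.length,
    Finsupp.single ⟨(i : ℕ), lt_of_lt_of_le i.isLt α.length_le⟩ (α.blocksFun i)

/-- The skeleton polynomial `Sk_λ(x) = Σ_{T ∈ ST(λ)} x^{des T}`. -/
noncomputable def Sk (n : ℕ) (p : n.Partition) : MvPolynomial (Fin n) ℂ :=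
  ∑ T : {T : SYT n // rowMult n T = p.parts},
    MvPolynomial.monomial (expOf n (desComp n T.1)) (1 : ℂ)

/-! The proof realises `w ↦ P(w)` by Fomin's growth diagrams. A permutation matrix determines a
grid of partitions growing by at most one box along each edge; the top side of the square reads off
`P(w)`, the right side `Q(w)`, and the local rule is invertible, so the permutation is recovered
from the two sides. For an involution the diagram is symmetric about the diagonal, hence the labels
of the horizontal edges determine the labels of the vertical ones, and `w` corresponds to a single
tableau. Labelling an edge by the row of the box it adds makes both the local rule and the
comparison of descents statements about natural numbers. -/

section LocalRule

/-- Fomin's local rule for a unit square of a growth diagram. The label of an edge is `0` if the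
partition stays the same along it, and `r + 1` if a box is added to row `r`; the bottom and left
edges carry `a` and `b`, the top and right edges carry `a'` and `b'`. Truncated subtraction covers
the squares all of whose edges are labelled `0`, as well as those containing a cross, in which
`a' = b' = 1`. -/
def LocalRule (a b a' b' : ℕ) : Prop :=
  (a' = b' ∧ a = a' - 1 ∧ b = b' - 1) ∨ (a' ≠ b' ∧ a = a' ∧ b = b')

/-- The change of the row lengths of a partition along an edge labelled `a`. -/
def box (a r : ℕ) : ℤ :=
  if a = r + 1 then 1 else 0

variable {a b a' b' : ℕ}

lemma LocalRule.box_add_box (H : LocalRule a b a' b') : box a + box b' = box b + box a' := by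
  funext r
  simp only [Pi.add_apply, box]
  rcases H with H | H <;> split_ifs <;> omega

lemma LocalRule.antitone_add_box_add_box (H : LocalRule a b a' b') {f : ℕ → ℤ} (hf : Antitone f)
    (ha : Antitone (f + box a)) (hb : Antitone (f + box b)) :
    Antitone (f + box a + box b') := by
  refine antitone_nat_of_succ_le fun r => ?_
  have hf := hf (Nat.le_add_right r 1)
  have ha := ha (Nat.le_add_right r 1)
  have hb := hb (Nat.le_add_right r 1)
  simp only [Pi.add_apply, box] at ha hb ⊢
  rcases H with H | H <;> split_ifs at * <;> omega

lemma LocalRule.antitone_of_add_box_add_box (H : LocalRule a b a' b') {f : ℕ → ℤ}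
    (hab : Antitone (f + box a + box b')) (ha : Antitone (f + box a))
    (hb : Antitone (f + box b)) : Antitone f := by
  refine antitone_nat_of_succ_le fun r => ?_
  have hab := hab (Nat.le_add_right r 1)
  have ha := ha (Nat.le_add_right r 1)
  have hb := hb (Nat.le_add_right r 1)
  simp only [Pi.add_apply, box] at hab ha hb
  rcases H with H | H <;> split_ifs at * <;> omega

lemma sum_box_apply (P : ℕ → ℕ) (k r : ℕ) :
    (∑ j ∈ Finset.range k, box (P j)) r = Nat.count (fun j => P j = r + 1) k := by
  simp [Finset.sum_apply, box, Nat.count_eq_card_filter_range]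

lemma eq_zero_of_monotone_sum_box {P : ℕ → ℕ} {n : ℕ}
    (hP : Monotone (∑ j ∈ Finset.range n, box (P j))) {j : ℕ} (hj : j < n) : P j = 0 := by
  by_contra hne
  set R := (Finset.range n).sup P
  have hR : ∀ k < n, P k ≤ R := fun k hk => Finset.le_sup (Finset.mem_range.2 hk)
  have hle := hP (show P j - 1 ≤ R from (Nat.sub_le _ _).trans (hR j hj))
  rw [sum_box_apply, sum_box_apply, Nat.cast_le] at hle
  have hzero : Nat.count (fun k => P k = R + 1) n = 0 :=
    Nat.count_iff_forall_not.2 fun k hk => (Nat.lt_succ_of_le (hR k hk)).ne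
  have hpos : Nat.count (fun k => P k = P j - 1 + 1) n ≠ 0 :=
    Nat.count_ne_iff_exists.2 ⟨j, hj, by omega⟩
  omega

end LocalRule

section Growth

/-- `h` labels the edges of an `n × n` growth diagram symmetric about the diagonal: `h i j` is the
label of the horizontal edge from `(i, j)` to `(i, j + 1)`, where `i` is the height, and by symmetry
also of the vertical edge from `(j, i)` to `(j + 1, i)`. -/
def IsGrowth (n : ℕ) (h : ℕ → ℕ → ℕ) : Prop :=
  ∀ i < n, ∀ j < n, LocalRule (h i j) (h j i) (h (i + 1) j) (h (j + 1) i)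

/-- The square with lower left corner `(i, j)` contains a cross, that is, an entry `1` of the
permutation matrix encoded by the diagram. -/
def IsCross (h : ℕ → ℕ → ℕ) (i j : ℕ) : Prop :=
  h (i + 1) j = 1 ∧ h (j + 1) i = 1

/-- The partition at the vertex `(i, j)`, as the function of its row lengths, of a growth diagram
with labels `h` and with `κ` at the origin. -/
def shapeAt (κ : ℕ → ℤ) (h : ℕ → ℕ → ℕ) (i j : ℕ) : ℕ → ℤ :=
  κ + ∑ k ∈ Finset.range i, box (h 0 k) + ∑ k ∈ Finset.range j, box (h i k)

variable {n : ℕ} {κ : ℕ → ℤ} {h : ℕ → ℕ → ℕ} {i j : ℕ}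

lemma shapeAt_succ_right (κ : ℕ → ℤ) (h : ℕ → ℕ → ℕ) (i j : ℕ) :
    shapeAt κ h i (j + 1) = shapeAt κ h i j + box (h i j) := by
  simp only [shapeAt, Finset.sum_range_succ, add_assoc]

namespace IsGrowth

lemma shapeAt_succ_left (H : IsGrowth n h) (hi : i < n) (hj : j ≤ n) :
    shapeAt κ h (i + 1) j = shapeAt κ h i j + box (h j i) := by
  induction j with
  | zero => simp only [shapeAt, Finset.sum_range_succ, Finset.sum_range_zero, add_zero, add_assoc]
  | succ j ih =>
    rw [shapeAt_succ_right, shapeAt_succ_right, ih (Nat.le_of_succ_le hj), add_assoc, add_assoc,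
      (H i hi j hj).box_add_box]

lemma shapeAt_comm (H : IsGrowth n h) (hi : i ≤ n) (hj : j ≤ n) :
    shapeAt κ h i j = shapeAt κ h j i := by
  induction i with
  | zero => simp only [shapeAt, Finset.sum_range_zero, add_zero]
  | succ i ih =>
    rw [shapeAt_succ_right, H.shapeAt_succ_left hi hj, ih (Nat.le_of_succ_le hi)]

lemma antitone_shapeAt_of_zero (H : IsGrowth n h) (h0 : ∀ j ≤ n, Antitone (shapeAt κ h 0 j))
    (hi : i ≤ n) (hj : j ≤ n) : Antitone (shapeAt κ h i j) := by
  induction i generalizing j with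
  | zero => exact h0 j hj
  | succ i ihi =>
    induction j with
    | zero => rw [H.shapeAt_comm hi hj]; exact h0 _ hi
    | succ j ihj =>
      have hi' := Nat.le_of_succ_le hi
      have hj' := Nat.le_of_succ_le hj
      have hright := ihi hi' hj
      have hup := ihj hj'
      rw [shapeAt_succ_right] at hright
      rw [H.shapeAt_succ_left hi hj'] at hup
      rw [H.shapeAt_succ_left hi hj, shapeAt_succ_right]
      exact (H i hi j hj).antitone_add_box_add_box (ihi hi' hj') hright hup

lemma antitone_shapeAt_of_top (H : IsGrowth n h) (hn : ∀ j ≤ n, Antitone (shapeAt κ h n j))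
    (hi : i ≤ n) (hj : j ≤ n) : Antitone (shapeAt κ h i j) := by
  induction hi using Nat.decreasingInduction generalizing j with
  | self => exact hn j hj
  | of_succ i hi ihi =>
    induction hj using Nat.decreasingInduction with
    | self => rw [H.shapeAt_comm hi.le le_rfl]; exact hn i hi.le
    | of_succ j hj ihj =>
      have hcorner := ihi hj
      have hup := ihi hj.le
      rw [H.shapeAt_succ_left hi hj, shapeAt_succ_right] at hcorner
      rw [H.shapeAt_succ_left hi hj.le] at hup
      rw [shapeAt_succ_right] at ihj
      exact (H i hi j hj).antitone_of_add_box_add_box hcorner ihj hup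

lemma antitone_sum_box_top (H : IsGrowth n h) (h0 : ∀ j < n, h 0 j = 0) (hj : j ≤ n) :
    Antitone (∑ k ∈ Finset.range j, box (h n k)) := by
  have hzero : ∀ k ≤ n, ∑ l ∈ Finset.range k, box (h 0 l) = 0 := fun k hk =>
    Finset.sum_eq_zero fun l hl => by
      rw [h0 l ((Finset.mem_range.1 hl).trans_le hk)]; rfl
  have hbottom : ∀ k ≤ n, Antitone (shapeAt 0 h 0 k) := fun k hk => by
    simp only [shapeAt, hzero k hk, Finset.sum_range_zero, add_zero]
    exact antitone_const
  simpa only [shapeAt, hzero n le_rfl, zero_add] using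
    H.antitone_shapeAt_of_zero hbottom le_rfl hj

-- Choosing the origin so that the shape at `(n, 0)` is empty makes all the shapes partitions. The
-- one at the origin has non-positive rows, almost all zero, so it is empty as well.
lemma zero_of_antitone_sum_box_top (H : IsGrowth n h)
    (hn : ∀ j ≤ n, Antitone (∑ k ∈ Finset.range j, box (h n k))) (hj : j < n) : h 0 j = 0 := by
  set κ : ℕ → ℤ := -∑ k ∈ Finset.range n, box (h 0 k) with hκ
  have htop : ∀ j ≤ n, Antitone (shapeAt κ h n j) := fun j hj => by
    simpa only [shapeAt, hκ, neg_add_cancel, zero_add] using hn j hj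
  have horigin : Antitone κ := by
    simpa only [shapeAt, Finset.sum_range_zero, add_zero] using
      H.antitone_shapeAt_of_top htop (Nat.zero_le n) (Nat.zero_le n)
  have hmono : Monotone (-κ) := horigin.neg
  rw [hκ, neg_neg] at hmono
  exact eq_zero_of_monotone_sum_box hmono hj

lemma eq_zero_iff (H : IsGrowth n h) (h0 : ∀ j < n, h 0 j = 0) (hi : i ≤ n) (hj : j < n) :
    h i j = 0 ↔ ∀ i' < i, ¬ IsCross h i' j := by
  induction i with
  | zero => simp only [h0 j hj, Nat.not_lt_zero, false_imp_iff, implies_true]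
  | succ i ih =>
    rw [Nat.forall_lt_succ_right, ← ih (Nat.le_of_succ_le hi)]
    have hrule := H i hi j hj
    unfold LocalRule at hrule
    unfold IsCross
    omega

lemma eq_zero_of_isCross (H : IsGrowth n h) (hi : i < n) (hj : j < n) (hx : IsCross h i j) :
    h i j = 0 := by
  have hrule := H i hi j hj
  unfold LocalRule at hrule
  unfold IsCross at hx
  omega

lemma isCross_unique (H : IsGrowth n h) (h0 : ∀ j < n, h 0 j = 0) {i' : ℕ} (hi : i < n)
    (hi' : i' < n) (hj : j < n) (hx : IsCross h i j) (hx' : IsCross h i' j) : i = i' := by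
  have hnot_lt : ∀ {k k'}, k' < n → IsCross h k j → IsCross h k' j → ¬ k < k' :=
    fun hk' hk hkk' hlt =>
      (H.eq_zero_iff h0 hk'.le hj).1 (H.eq_zero_of_isCross hk' hj hkk') _ hlt hk
  exact le_antisymm (not_lt.1 (hnot_lt hi hx' hx)) (not_lt.1 (hnot_lt hi' hx hx'))

end IsGrowth

end Growth

section Forward

/-- The labels of the symmetric growth diagram with empty partitions on its bottom and left sides
and a cross in column `j` at height `σ j`, for every `j`. -/
def forwardGrowth (σ : ℕ → ℕ) : ℕ → ℕ → ℕ
  | 0, _ => 0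
  | i + 1, j =>
    if σ j = i then 1
    else if forwardGrowth σ i j = forwardGrowth σ j i then
      if forwardGrowth σ i j = 0 then 0 else forwardGrowth σ i j + 1
    else forwardGrowth σ i j
termination_by i j => i + j

/-- `h` labels the `n × n` growth diagram of the involution `σ`. -/
structure IsGrowthOf (n : ℕ) (σ : ℕ → ℕ) (h : ℕ → ℕ → ℕ) : Prop where
  isGrowth : IsGrowth n h
  zero : ∀ j < n, h 0 j = 0
  isCross_iff : ∀ i < n, ∀ j < n, (IsCross h i j ↔ σ j = i)

variable {n : ℕ} {σ : ℕ → ℕ} {h : ℕ → ℕ → ℕ} {i j : ℕ}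

lemma forwardGrowth_eq_zero (hij : i ≤ σ j) : forwardGrowth σ i j = 0 := by
  induction i with
  | zero => rw [forwardGrowth]
  | succ i ih =>
    have hzero := ih (Nat.le_of_succ_le hij)
    rw [forwardGrowth, if_neg (Nat.lt_of_succ_le hij).ne', hzero]
    split_ifs <;> first | rfl | contradiction

lemma isGrowthOf_forwardGrowth (hσ : Function.Involutive σ) (n : ℕ) :
    IsGrowthOf n σ (forwardGrowth σ) where
  isGrowth i _ j _ := by
    have hij : σ j = i → forwardGrowth σ i j = 0 := fun h => forwardGrowth_eq_zero h.ge
    have hji : σ i = j → forwardGrowth σ j i = 0 := fun h => forwardGrowth_eq_zero h.ge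
    have hcross : σ i = j ↔ σ j = i := hσ.eq_iff.trans eq_comm
    rw [LocalRule, forwardGrowth.eq_2 σ j i, forwardGrowth.eq_2 σ i j]
    grind
  zero j _ := by rw [forwardGrowth]
  isCross_iff i _ j _ := by
    have hcross : σ i = j ↔ σ j = i := hσ.eq_iff.trans eq_comm
    rw [IsCross, forwardGrowth.eq_2 σ j i, forwardGrowth.eq_2 σ i j]
    grind

namespace IsGrowthOf

lemma eq_forwardGrowth (H : IsGrowthOf n σ h) (hi : i ≤ n) (hj : j < n) :
    h i j = forwardGrowth σ i j := by
  fun_induction forwardGrowth σ i j with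
  | case1 j => exact H.zero j hj
  | case2 j => exact ((H.isCross_iff _ hi _ hj).2 rfl).1
  | _ j i hij =>
    have hrule := H.isGrowth j hi i hj
    have hcross := H.isCross_iff j hi i hj
    grind [LocalRule, IsCross]

lemma eq_zero_iff (H : IsGrowthOf n σ h) (hi : i ≤ n) (hj : j < n) : h i j = 0 ↔ i ≤ σ j := by
  rw [H.isGrowth.eq_zero_iff H.zero hi hj]
  refine ⟨fun hx => not_lt.1 fun hlt => ?_, fun hle k hk hx => ?_⟩
  · exact hx _ hlt ((H.isCross_iff _ (hlt.trans_le hi) j hj).2 rfl)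
  · exact (hk.trans_le hle).ne' ((H.isCross_iff k (hk.trans_le hi) j hj).1 hx)

lemma succ_le_of_le (H : IsGrowthOf n σ h) (hj : j + 1 < n) (hσ : σ j ≤ σ (j + 1)) (hi : i ≤ n) :
    h i (j + 1) ≤ h i j := by
  induction i with
  | zero => rw [H.zero _ hj]; exact Nat.zero_le _
  | succ i ih =>
    have ih := ih (Nat.le_of_succ_le hi)
    have hrule := H.isGrowth i hi j (Nat.lt_of_succ_lt hj)
    have hrule' := H.isGrowth i hi (j + 1) hj
    have hzero := H.eq_zero_iff hi (Nat.lt_of_succ_lt hj)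
    have hcross' := H.isCross_iff i hi (j + 1) hj
    unfold LocalRule at hrule hrule'
    unfold IsCross at hcross'
    omega

lemma eq_zero_or_lt_of_lt (H : IsGrowthOf n σ h) (hj : j + 1 < n) (hσ : σ (j + 1) < σ j)
    (hi : i ≤ n) : h i (j + 1) = 0 ∨ h i j < h i (j + 1) := by
  induction i with
  | zero => exact .inl (H.zero _ hj)
  | succ i ih =>
    have ih := ih (Nat.le_of_succ_le hi)
    have hrule := H.isGrowth i hi j (Nat.lt_of_succ_lt hj)
    have hrule' := H.isGrowth i hi (j + 1) hj
    have hzero := H.eq_zero_iff (Nat.le_of_succ_le hi) (Nat.lt_of_succ_lt hj)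
    have hzero' := H.eq_zero_iff (Nat.le_of_succ_le hi) hj
    have hcross := H.isCross_iff i hi j (Nat.lt_of_succ_lt hj)
    have hcross' := H.isCross_iff i hi (j + 1) hj
    unfold LocalRule at hrule hrule'
    unfold IsCross at hcross hcross'
    omega

lemma lt_succ_iff (H : IsGrowthOf n σ h) (hσ : ∀ j < n, σ j < n) (hj : j + 1 < n) :
    h n j < h n (j + 1) ↔ σ (j + 1) < σ j := by
  refine ⟨fun hlt => not_le.1 fun hle => ?_, fun hlt => ?_⟩
  · exact hlt.not_ge (H.succ_le_of_le hj hle le_rfl)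
  · have hpos : h n (j + 1) ≠ 0 := fun h0 =>
      ((H.eq_zero_iff le_rfl hj).1 h0).not_gt (hσ _ hj)
    exact (H.eq_zero_or_lt_of_lt hj hlt le_rfl).resolve_left hpos

end IsGrowthOf

end Forward

section Backward

/-- The labels of the symmetric growth diagram whose top side carries the labels `P`. -/
def backwardGrowth (n : ℕ) (P : ℕ → ℕ) (i j : ℕ) : ℕ :=
  if i < n ∧ j < n then
    if backwardGrowth n P (i + 1) j = backwardGrowth n P (j + 1) i then
      backwardGrowth n P (i + 1) j - 1
    else backwardGrowth n P (i + 1) j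
  else P j
termination_by (n - i) + (n - j)

variable {n : ℕ} {P : ℕ → ℕ} {h : ℕ → ℕ → ℕ} {i j : ℕ}

lemma backwardGrowth_top (n : ℕ) (P : ℕ → ℕ) (j : ℕ) : backwardGrowth n P n j = P j := by
  rw [backwardGrowth, if_neg fun h => h.1.false]

lemma isGrowth_backwardGrowth (n : ℕ) (P : ℕ → ℕ) : IsGrowth n (backwardGrowth n P) := by
  intro i hi j hj
  rw [LocalRule, backwardGrowth.eq_1 n P i j, backwardGrowth.eq_1 n P j i, if_pos (And.intro hi hj),
    if_pos (And.intro hj hi)]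
  split_ifs <;> omega

lemma IsGrowth.eq_backwardGrowth (H : IsGrowth n h) (hP : ∀ j < n, h n j = P j) (hi : i ≤ n)
    (hj : j < n) : h i j = backwardGrowth n P i j := by
  fun_induction backwardGrowth n P i j with
  | case3 i j hij =>
    have hin : i = n := le_antisymm hi (not_lt.1 fun hlt => hij ⟨hlt, hj⟩)
    rw [hin, hP j hj]
  | _ i j hij =>
    have hrule := H i hij.1 j hij.2
    grind [LocalRule]

lemma IsGrowth.exists_involutive_isCross_iff (H : IsGrowth n h)
    (hn : ∀ j ≤ n, Antitone (∑ k ∈ Finset.range j, box (h n k))) (hpos : ∀ j < n, h n j ≠ 0) :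
    ∃ f : Fin n → Fin n, Function.Involutive f ∧ ∀ i j : Fin n, IsCross h i j ↔ f j = i := by
  have h0 : ∀ j < n, h 0 j = 0 := fun j hj => H.zero_of_antitone_sum_box_top hn hj
  have hexists : ∀ j : Fin n, ∃ i : Fin n, IsCross h i j := fun j => by
    by_contra hnone
    refine hpos j j.isLt ((H.eq_zero_iff h0 le_rfl j.isLt).2 fun i hi hx => ?_)
    exact hnone ⟨⟨i, hi⟩, hx⟩
  have hunique : ∀ i i' j : Fin n, IsCross h i j → IsCross h i' j → i = i' :=
    fun i i' j hx hx' => Fin.ext (H.isCross_unique h0 i.isLt i'.isLt j.isLt hx hx')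
  choose f hf using hexists
  refine ⟨f, fun j => hunique _ _ _ (hf (f j)) (hf j).symm, fun i j => ⟨?_, ?_⟩⟩
  · exact hunique _ _ _ (hf j)
  · rintro rfl
    exact hf j

end Backward

section Ballot

lemma exists_count_eq_of_lt_count {p : ℕ → Prop} [DecidablePred p] {m k : ℕ}
    (hm : m < Nat.count p k) : ∃ j < k, p j ∧ Nat.count p j = m :=
  have hcard : ∀ hf : (Set.ofPred p).Finite, m < hf.toFinset.card :=
    fun hf => hm.trans_le (Nat.count_le_card hf k)
  ⟨Nat.nth p m, Nat.nth_lt_of_lt_count hm, Nat.nth_mem m hcard, Nat.count_nth hcard⟩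

/-- The word of rows `ρ 0, …, ρ (n - 1)` is a ballot (lattice, Yamanouchi) word: in every prefix,
each row occurs at least as often as the next one. -/
def IsBallot (n : ℕ) (ρ : ℕ → ℕ) : Prop :=
  ∀ k ≤ n, Antitone fun r => Nat.count (fun j => ρ j = r) k

variable {n : ℕ} {ρ : ℕ → ℕ}

lemma isBallot_iff_antitone_sum_box :
    IsBallot n ρ ↔ ∀ k ≤ n, Antitone (∑ j ∈ Finset.range k, box (ρ j + 1)) := by
  refine forall₂_congr fun k _ => forall₃_congr fun r s _ => ?_
  simp only [sum_box_apply, Nat.cast_le, Nat.add_right_cancel_iff]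

namespace IsBallot

lemma le_self (H : IsBallot n ρ) {j : ℕ} (hj : j < n) : ρ j ≤ j := by
  induction j using Nat.strong_induction_on with
  | _ j ih =>
    rcases hρ : ρ j with _ | r
    · exact Nat.zero_le _
    have hprefix := H (j + 1) hj (Nat.le_add_right r 1)
    simp only [Nat.count_succ, hρ, if_true, if_neg (Nat.lt_succ_self r).ne'] at hprefix
    obtain ⟨i, hij, hi, -⟩ := exists_count_eq_of_lt_count
      (show 0 < Nat.count (fun i => ρ i = r) j by omega)
    have := ih i hij (hij.trans hj)
    omega

/-- The position of entry `j` when the entries are successively appended to the rows `ρ j`. -/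
def pos (H : IsBallot n ρ) (j : Fin n) : Fin n × Fin n :=
  (⟨ρ j, (H.le_self j.isLt).trans_lt j.isLt⟩,
    ⟨Nat.count (fun i => ρ i = ρ j) j, (Nat.count_le _).trans_lt j.isLt⟩)

lemma pos_eq_iff (H : IsBallot n ρ) {j r c : Fin n} :
    H.pos j = (r, c) ↔ ρ j = r ∧ Nat.count (fun i => ρ i = r) j = c := by
  rw [pos, Prod.mk_inj, Fin.ext_iff, Fin.ext_iff]
  exact and_congr_right fun hrow : ρ j = r => by simp only [hrow]

lemma pos_injective (H : IsBallot n ρ) : Function.Injective H.pos := by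
  intro i j hij
  obtain ⟨hrow, hcol⟩ := H.pos_eq_iff.1 hij
  exact Fin.ext (Nat.count_injective (p := fun k => ρ k = ρ j) hrow rfl hcol)

lemma exists_pos_eq (H : IsBallot n ρ) {i r c : Fin n} (hr : r ≤ (H.pos i).1)
    (hc : c ≤ (H.pos i).2) : ∃ j, H.pos j = (r, c) := by
  have hlt : (c : ℕ) < Nat.count (fun j => ρ j = r) (i + 1) :=
    calc (c : ℕ) < Nat.count (fun j => ρ j = ρ i) i + 1 := Nat.lt_succ_of_le hc
      _ = Nat.count (fun j => ρ j = ρ i) (i + 1) := by rw [Nat.count_succ, if_pos rfl]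
      _ ≤ Nat.count (fun j => ρ j = r) (i + 1) := H (i + 1) i.isLt hr
  obtain ⟨j, hj, hrow, hcol⟩ := exists_count_eq_of_lt_count hlt
  exact ⟨⟨j, hj.trans_le i.isLt⟩, H.pos_eq_iff.2 ⟨hrow, hcol⟩⟩

lemma lt_of_row_eq (H : IsBallot n ρ) {i j : Fin n} (hrow : (H.pos i).1 = (H.pos j).1)
    (hcol : (H.pos i).2 < (H.pos j).2) : i < j := by
  have hcount : Nat.count (fun k => ρ k = ρ i) i < Nat.count (fun k => ρ k = ρ j) j := hcol
  rw [show ρ i = ρ j from congrArg Fin.val hrow] at hcount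
  exact Nat.lt_of_count_lt_count hcount

lemma lt_of_col_eq (H : IsBallot n ρ) {i j : Fin n} (hcol : (H.pos i).2 = (H.pos j).2)
    (hrow : (H.pos i).1 < (H.pos j).1) : i < j := by
  have hle : (i : ℕ) < j + 1 := Nat.lt_of_count_lt_count (p := fun k => ρ k = ρ i) <|
    calc Nat.count (fun k => ρ k = ρ i) i
      _ = Nat.count (fun k => ρ k = ρ j) j := congrArg Fin.val hcol
      _ < Nat.count (fun k => ρ k = ρ j) (j + 1) := Nat.count_lt_count_succ_iff.2 rfl
      _ ≤ Nat.count (fun k => ρ k = ρ i) (j + 1) := H (j + 1) j.isLt hrow.le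
  refine lt_of_le_of_ne (Nat.le_of_lt_succ hle) ?_
  rintro rfl
  exact hrow.false

lemma isSYT_pos (H : IsBallot n ρ) : IsSYT n H.pos :=
  ⟨H.pos_injective, fun _ _ _ => H.exists_pos_eq, fun _ _ h =>
    h.elim (fun h => H.lt_of_row_eq h.1 h.2) fun h => H.lt_of_col_eq h.1 h.2⟩

end IsBallot

end Ballot

namespace SYT

variable {n : ℕ}

/-- The row of entry `j` of a tableau, extended by `0` to all natural numbers. -/
def rowWord (T : SYT n) (j : ℕ) : ℕ :=
  if h : j < n then (T.1 ⟨j, h⟩).1 else 0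

lemma rowWord_of_lt (T : SYT n) {j : ℕ} (hj : j < n) : T.rowWord j = (T.1 ⟨j, hj⟩).1 :=
  dif_pos hj

lemma exists_le_pos_eq (T : SYT n) {j r c : Fin n} (hr : r ≤ (T.1 j).1) (hc : c ≤ (T.1 j).2) :
    ∃ i ≤ j, T.1 i = (r, c) := by
  obtain ⟨hinj, hdown, hincr⟩ := T.2
  obtain ⟨k, hk⟩ := hdown j r (T.1 j).2 hr le_rfl
  have hkj : k ≤ j := by
    rcases hr.eq_or_lt with rfl | hlt
    · exact (hinj hk).le
    · exact (hincr k j (.inr (by rw [hk]; exact ⟨rfl, hlt⟩))).le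
  obtain ⟨i, hi⟩ := hdown k r c (by rw [hk]) (by rw [hk]; exact hc)
  have hik : i ≤ k := by
    rcases hc.eq_or_lt with rfl | hlt
    · exact (hinj (hi.trans hk.symm)).le
    · exact (hincr i k (.inl (by rw [hi, hk]; exact ⟨rfl, hlt⟩))).le
  exact ⟨i, hik.trans hkj, hi⟩

lemma count_rowWord (T : SYT n) {k : ℕ} (hk : k ≤ n) (r : ℕ) :
    Nat.count (fun j => T.rowWord j = r) k =
      (Finset.univ.filter fun j : Fin n => (j : ℕ) < k ∧ ((T.1 j).1 : ℕ) = r).card := by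
  rw [Nat.count_eq_card_filter_range, ← Finset.card_map Fin.valEmbedding]
  congr 1
  ext j
  simp only [Finset.mem_filter, Finset.mem_range, Finset.mem_map, Finset.mem_univ, true_and,
    Fin.valEmbedding_apply]
  constructor
  · rintro ⟨hj, hrow⟩
    exact ⟨⟨j, hj.trans_le hk⟩, ⟨hj, (T.rowWord_of_lt _).symm.trans hrow⟩, rfl⟩
  · rintro ⟨j, ⟨hj, hrow⟩, rfl⟩
    exact ⟨hj, (T.rowWord_of_lt j.isLt).trans hrow⟩

lemma isBallot_rowWord (T : SYT n) : IsBallot n T.rowWord := by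
  intro k hk r s hrs
  simp only [T.count_rowWord hk]
  refine Finset.card_le_card_of_forall_subsingleton (fun j i => (T.1 i).2 = (T.1 j).2) ?_ ?_
  · intro j hj
    obtain ⟨hjk, rfl⟩ := (Finset.mem_filter.1 hj).2
    obtain ⟨i, hij, hi⟩ := T.exists_le_pos_eq (r := ⟨r, hrs.trans_lt (T.1 j).1.isLt⟩) hrs le_rfl
    refine ⟨i, Finset.mem_filter.2 ⟨Finset.mem_univ i, ?_, ?_⟩, ?_⟩
    · exact lt_of_le_of_lt hij hjk
    · rw [hi]
    · rw [hi]
  · rintro i - j ⟨hj, hij⟩ j' ⟨hj', hij'⟩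
    have hrow : (T.1 j).1 = (T.1 j').1 :=
      Fin.ext ((Finset.mem_filter.1 hj).2.2.trans (Finset.mem_filter.1 hj').2.2.symm)
    exact T.2.1 (Prod.ext hrow (hij.symm.trans hij'))

lemma col_le_of_row_eq {T T' : SYT n} (hrow : ∀ j, (T.1 j).1 = (T'.1 j).1) {j : Fin n}
    (hcol : ∀ i < j, (T.1 i).2 = (T'.1 i).2) : (T'.1 j).2 ≤ (T.1 j).2 := by
  by_contra! hlt
  obtain ⟨i, hij, hi⟩ := T'.exists_le_pos_eq (hrow j).le hlt.le
  rcases hij.eq_or_lt with rfl | hij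
  · exact hlt.ne' (congrArg Prod.snd hi)
  · have hTi : T.1 i = T.1 j :=
      Prod.ext ((hrow i).trans (congrArg Prod.fst hi)) ((hcol i hij).trans (congrArg Prod.snd hi))
    exact hij.ne (T.2.1 hTi)

lemma eq_of_rowWord_eq {T T' : SYT n} (hword : ∀ j < n, T.rowWord j = T'.rowWord j) : T = T' := by
  have hrow : ∀ j, (T.1 j).1 = (T'.1 j).1 := fun j => Fin.ext <| by
    rw [← T.rowWord_of_lt j.isLt, hword j j.isLt, T'.rowWord_of_lt j.isLt]
  have hcol : ∀ j, (T.1 j).2 = (T'.1 j).2 := fun j => by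
    induction j using WellFoundedLT.induction with
    | _ j ih =>
      exact le_antisymm (col_le_of_row_eq (fun i => (hrow i).symm) fun i hi => (ih i hi).symm)
        (col_le_of_row_eq hrow ih)
  exact Subtype.ext (funext fun j => Prod.ext (hrow j) (hcol j))

end SYT

lemma IsBallot.exists_rowWord_eq {n : ℕ} {ρ : ℕ → ℕ} (H : IsBallot n ρ) :
    ∃ T : SYT n, ∀ j < n, T.rowWord j = ρ j :=
  ⟨⟨H.pos, H.isSYT_pos⟩, fun _ hj => SYT.rowWord_of_lt _ hj⟩

section Insertion

variable {n : ℕ}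

/-- The extension of a permutation of `Fin n` to `ℕ` that fixes all `j ≥ n`. -/
def natExtend (w : Equiv.Perm (Fin n)) : Equiv.Perm ℕ :=
  w.extendDomain Fin.equivSubtype

lemma natExtend_coe (w : Equiv.Perm (Fin n)) (j : Fin n) : natExtend w j = w j :=
  w.extendDomain_apply_image Fin.equivSubtype j

lemma natExtend_lt (w : Equiv.Perm (Fin n)) {j : ℕ} (hj : j < n) : natExtend w j < n := by
  rw [natExtend_coe w ⟨j, hj⟩]
  exact (w ⟨j, hj⟩).isLt

lemma involutive_natExtend {w : Equiv.Perm (Fin n)} (hw : w * w = 1) :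
    Function.Involutive (natExtend w) := fun j => by
  rw [← Equiv.Perm.mul_apply, natExtend, Equiv.Perm.extendDomain_mul, hw,
    Equiv.Perm.extendDomain_one, Equiv.Perm.one_apply]

lemma isGrowthOf_natExtend {w : Equiv.Perm (Fin n)} (hw : w * w = 1) :
    IsGrowthOf n (natExtend w) (forwardGrowth (natExtend w)) :=
  isGrowthOf_forwardGrowth (involutive_natExtend hw) n

/-- `T` is the insertion tableau `P(w)` of the involution `w`, read off the top side of the growth
diagram of `w`: entry `j` of `T` lies in the row of the box added along the `j`-th edge. -/
def IsInsertionTableau (w : Equiv.Perm (Fin n)) (T : SYT n) : Prop :=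
  ∀ j < n, forwardGrowth (natExtend w) n j = T.rowWord j + 1

lemma exists_isInsertionTableau {w : Equiv.Perm (Fin n)} (hw : w * w = 1) :
    ∃ T, IsInsertionTableau w T := by
  have H := isGrowthOf_natExtend hw
  have hpred : ∀ j < n, forwardGrowth (natExtend w) n j - 1 + 1 = forwardGrowth (natExtend w) n j :=
    fun j hj => Nat.succ_pred fun h0 =>
      ((H.eq_zero_iff le_rfl hj).1 h0).not_gt (natExtend_lt w hj)
  have hballot : IsBallot n fun j => forwardGrowth (natExtend w) n j - 1 :=
    isBallot_iff_antitone_sum_box.2 fun k hk => by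
      rw [Finset.sum_congr rfl fun j hj => by rw [hpred j ((Finset.mem_range.1 hj).trans_le hk)]]
      exact H.isGrowth.antitone_sum_box_top H.zero hk
  obtain ⟨T, hT⟩ := hballot.exists_rowWord_eq
  exact ⟨T, fun j hj => by rw [hT j hj, hpred j hj]⟩

lemma exists_involution_isInsertionTableau (T : SYT n) :
    ∃ w : Equiv.Perm (Fin n), w * w = 1 ∧ IsInsertionTableau w T := by
  have H := isGrowth_backwardGrowth n fun j => T.rowWord j + 1
  set h := backwardGrowth n fun j => T.rowWord j + 1
  have htop : ∀ j, h n j = T.rowWord j + 1 := backwardGrowth_top n _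
  have hanti : ∀ j ≤ n, Antitone (∑ k ∈ Finset.range j, box (h n k)) := by
    simpa only [htop] using isBallot_iff_antitone_sum_box.1 T.isBallot_rowWord
  obtain ⟨f, hf, hcross⟩ := H.exists_involutive_isCross_iff hanti fun j _ => by
    rw [htop]; exact Nat.succ_ne_zero _
  have hgrowth : IsGrowthOf n (natExtend hf.toPerm) h :=
    { isGrowth := H
      zero := fun j hj => H.zero_of_antitone_sum_box_top hanti hj
      isCross_iff := fun i hi j hj => by
        rw [hcross ⟨i, hi⟩ ⟨j, hj⟩, natExtend_coe hf.toPerm ⟨j, hj⟩, ← Fin.val_inj,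
          Function.Involutive.coe_toPerm] }
  exact ⟨hf.toPerm, Equiv.ext hf, fun j hj => by
    rw [← hgrowth.eq_forwardGrowth le_rfl hj, htop]⟩

namespace IsInsertionTableau

variable {w w' : Equiv.Perm (Fin n)} {T T' : SYT n}

lemma tableau_unique (H : IsInsertionTableau w T) (H' : IsInsertionTableau w T') : T = T' :=
  SYT.eq_of_rowWord_eq fun j hj => Nat.succ_injective ((H j hj).symm.trans (H' j hj))

lemma involution_unique (H : IsInsertionTableau w T) (H' : IsInsertionTableau w' T)
    (hw : w * w = 1) (hw' : w' * w' = 1) : w = w' := by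
  have hgrowth := isGrowthOf_natExtend hw
  have hgrowth' := isGrowthOf_natExtend hw'
  have heq : ∀ i ≤ n, ∀ j < n,
      forwardGrowth (natExtend w) i j = forwardGrowth (natExtend w') i j := fun i hi j hj =>
    (hgrowth.isGrowth.eq_backwardGrowth H hi hj).trans
      (hgrowth'.isGrowth.eq_backwardGrowth H' hi hj).symm
  have hcross : ∀ i j : Fin n, IsCross (forwardGrowth (natExtend w)) i j →
      IsCross (forwardGrowth (natExtend w')) i j := fun i j hx =>
    ⟨(heq _ i.isLt _ j.isLt).symm.trans hx.1, (heq _ j.isLt _ i.isLt).symm.trans hx.2⟩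
  refine Equiv.ext fun j => Fin.ext ?_
  have hx := (hgrowth.isCross_iff (w j) (w j).isLt j j.isLt).2 (natExtend_coe w j)
  have hx' := (hgrowth'.isCross_iff (w j) (w j).isLt j j.isLt).1 (hcross _ _ hx)
  rw [← hx', natExtend_coe]

lemma permDesSet_eq (H : IsInsertionTableau w T) (hw : w * w = 1) :
    permDesSet n w = desSet n T := by
  refine Finset.filter_congr fun j _ => ?_
  have hj : (j : ℕ) + 1 < n := Nat.add_lt_of_lt_sub j.isLt
  have hdes := (isGrowthOf_natExtend hw).lt_succ_iff (fun _ => natExtend_lt w) hj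
  rw [H j (Nat.lt_of_succ_lt hj), H (j + 1) hj, Nat.add_lt_add_iff_right,
    T.rowWord_of_lt (Nat.lt_of_succ_lt hj), T.rowWord_of_lt hj] at hdes
  rw [Fin.lt_def, Fin.lt_def, hdes, ← natExtend_coe, ← natExtend_coe]

end IsInsertionTableau

theorem exists_equiv_permDesSet_eq_desSet (n : ℕ) :
    ∃ e : {w : Equiv.Perm (Fin n) // w * w = 1} ≃ SYT n,
      ∀ w, permDesSet n w.1 = desSet n (e w) := by
  choose P hP using fun w : {w : Equiv.Perm (Fin n) // w * w = 1} =>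
    exists_isInsertionTableau w.2
  have hbij : Function.Bijective P := by
    refine ⟨fun w w' h => ?_, fun T => ?_⟩
    · exact Subtype.ext ((h ▸ hP w).involution_unique (hP w') w.2 w'.2)
    · obtain ⟨w, hw, hT⟩ := exists_involution_isInsertionTableau T
      exact ⟨⟨w, hw⟩, (hP _).tableau_unique hT⟩
  exact ⟨Equiv.ofBijective P hbij, fun w => (hP w).permDesSet_eq w.2⟩

end Insertion

section Shape

variable {n : ℕ}

lemma SYT.sum_rowLen (T : SYT n) : ∑ r, rowLen n T r = n :=
  (Finset.card_eq_sum_card_fiberwise fun _ _ => Finset.mem_univ _).symm.trans (Finset.card_fin n)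

/-- The shape of a standard Young tableau with `n` boxes, as a partition of `n`. -/
def SYT.shape (T : SYT n) : n.Partition :=
  Nat.Partition.ofSums n (Finset.univ.val.map (rowLen n T)) T.sum_rowLen

lemma SYT.shape_parts (T : SYT n) : T.shape.parts = rowMult n T := by
  simp only [SYT.shape, Nat.Partition.ofSums, rowMult, Nat.pos_iff_ne_zero]

lemma sum_Sk (n : ℕ) :
    ∑ p, Sk n p = ∑ T : SYT n, MvPolynomial.monomial (expOf n (desComp n T)) (1 : ℂ) := by
  rw [← Fintype.sum_fiberwise SYT.shape]
  refine Fintype.sum_congr _ _ fun p => ?_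
  refine Fintype.sum_equiv (Equiv.subtypeEquivRight fun T => ?_) _ _ fun _ => rfl
  rw [Nat.Partition.ext_iff, T.shape_parts]

end Shape

/-- `Σ_{w ∈ Sₙ, w² = id} x^{des(w)} = Σ_{λ ⊢ n} Sk_λ(x)`. -/
theorem stmt12 (n : ℕ) :
    ∑ w : {w : Equiv.Perm (Fin n) // w * w = 1},
      MvPolynomial.monomial (expOf n (permDesComp n w.1)) (1 : ℂ) =
    ∑ p : n.Partition, Sk n p := by
  obtain ⟨e, he⟩ := exists_equiv_permDesSet_eq_desSet n
  rw [sum_Sk]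
  exact Fintype.sum_equiv e _ _ fun w => by rw [permDesComp, desComp, he]
end

section
/- Let λ be a partition of n with λ ≠ ∅. The maximum of ℓ(des(T)) over standard Young tableaux T of shape λ equals n - (λ₁ - 1), and the minimum equals ℓ(λ), the number of rows of λ. -/
/-!
The composition `des T` has one part more than `T` has descents, and each descent of `T` is
determined by its bottom, the entry following it.

A descent bottom lies strictly below another entry, hence outside the first row, so `T` has at most
`n - λ₁` descents. If the columns of the entries `1, …, n` increase weakly, every entry outside the
first row lies directly below its predecessor, and the bound is attained.

The smallest entry of each row other than the first is a descent bottom, so `T` has at least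
`ℓ(λ) - 1` descents. If the rows of the entries increase weakly, no row contains a second descent
bottom, and the bound is attained.

Tableaux of shape `λ` are the linear extensions of the poset of cells of `λ`, so some tableau
visits the cells by weakly increasing column, and another by weakly increasing row.
-/

open Finset

section Composition

theorem boundaries_compositionAsSetEquiv_symm {m : ℕ} (s : Finset (Fin m)) :
    ((compositionAsSetEquiv (m + 1)).symm s).boundaries =
      insert 0 (insert (Fin.last (m + 1)) (s.image fun j => j.succ.castSucc)) := by
  ext i
  simp only [compositionAsSetEquiv, Equiv.coe_fn_symm_mk, mem_insert, mem_image,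
    Set.mem_toFinset, Set.mem_ofPred_eq, Fin.ext_iff, exists_prop, Fin.val_castSucc, Fin.val_succ,
    Fin.val_zero, eq_comm (a := (i : ℕ))]
  rfl

theorem length_compositionAsSetEquiv_symm {n : ℕ} [NeZero n] (s : Finset (Fin (n - 1))) :
    ((compositionAsSetEquiv n).symm s).length = #s + 1 := by
  obtain ⟨m, rfl⟩ := Nat.exists_eq_add_one_of_ne_zero (NeZero.ne n)
  have card_interior : #(s.image fun j : Fin m => j.succ.castSucc) = #s :=
    card_image_of_injective _ ((Fin.castSucc_injective _).comp (Fin.succ_injective _))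
  have last_notMem : Fin.last (m + 1) ∉ s.image fun j : Fin m => j.succ.castSucc := by
    simp [Fin.castSucc_ne_last]
  have zero_notMem :
      0 ∉ insert (Fin.last (m + 1)) (s.image fun j : Fin m => j.succ.castSucc) := by
    simp [Fin.ext_iff]
  rw [CompositionAsSet.length, boundaries_compositionAsSetEquiv_symm,
    card_insert_of_notMem zero_notMem, card_insert_of_notMem last_notMem, card_interior,
    Nat.add_sub_cancel]

end Composition

namespace SYT

variable {n : ℕ} (T : SYT n)

/-- The row of the `i`-th entry of `T`, counted from `0`. -/
def row (i : Fin n) : Fin n := (T.1 i).1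

/-- The column of the `i`-th entry of `T`, counted from `0`. -/
def col (i : Fin n) : Fin n := (T.1 i).2

/-- The entries of `T` that lie strictly below their predecessor, i.e. the successors of the
descents of `T`. Indexing a descent by its successor makes it an element of `Fin n`. The entry `0`
is its own `Order.pred`, hence never counted. -/
def descentBottoms : Finset (Fin n) := {i | T.row (Order.pred i) < T.row i}

variable {T} in
theorem mem_descentBottoms {i : Fin n} :
    i ∈ T.descentBottoms ↔ T.row (Order.pred i) < T.row i := by
  simp [descentBottoms]

theorem card_descentBottoms : #T.descentBottoms = #(desSet n T) := by
  cases n with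
  | zero => simp [descentBottoms, desSet]
  | succ m =>
    have descentBottoms_eq : T.descentBottoms = (desSet (m + 1) T).map (Fin.succEmb m) := by
      ext j
      cases j using Fin.cases with
      | zero => simp [mem_descentBottoms]
      | succ i =>
        rw [mem_descentBottoms, Fin.orderPred_succ, ← Fin.coe_succEmb, mem_map']
        exact (mem_filter_univ (p := fun i : Fin m => T.row i.castSucc < T.row i.succ) i).symm
    rw [descentBottoms_eq, card_map]

theorem length_desComp [NeZero n] : (desComp n T).length = #T.descentBottoms + 1 := by
  rw [desComp, CompositionAsSet.toComposition_length, length_compositionAsSetEquiv_symm,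
    card_descentBottoms]

section Cells

variable {T} {i j r : Fin n}

theorem le_of_row_le_of_col_eq (hrow : T.row i ≤ T.row j) (hcol : T.col i = T.col j) : i ≤ j := by
  rcases hrow.lt_or_eq with hlt | heq
  · exact (T.2.2.2 i j (Or.inr ⟨hcol, hlt⟩)).le
  · exact (T.2.1 (Prod.ext heq hcol)).le

theorem exists_le_of_le_row (hr : r ≤ T.row i) : ∃ k ≤ i, T.row k = r ∧ T.col k = T.col i := by
  obtain ⟨k, hk⟩ := T.2.2.1 i r (T.col i) hr le_rfl
  have hrow : T.row k = r := congrArg (·.1) hk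
  have hcol : T.col k = T.col i := congrArg (·.2) hk
  exact ⟨k, le_of_row_le_of_col_eq (hrow.trans_le hr) hcol, hrow, hcol⟩

theorem exists_lt_of_lt_row (hr : r < T.row i) : ∃ k < i, T.row k = r ∧ T.col k = T.col i := by
  obtain ⟨k, hki, hrow, hcol⟩ := exists_le_of_le_row hr.le
  exact ⟨k, hki.lt_of_ne fun h => hr.ne (h ▸ hrow).symm, hrow, hcol⟩

end Cells

section RowLengths

theorem rowLen_pos_iff {r : Fin n} : 0 < rowLen n T r ↔ r ∈ univ.image T.row := by
  simp [rowLen, row, card_pos, Finset.Nonempty]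

theorem card_rowMult : (rowMult n T).card = #(univ.image T.row) := by
  simp only [rowMult, Multiset.filter_map, Multiset.card_map, Function.comp_def, rowLen_pos_iff]
  exact congrArg card (filter_univ_mem _)

variable [NeZero n]

theorem zero_mem_image_row : 0 ∈ univ.image T.row := by
  obtain ⟨k, -, hk, -⟩ := exists_le_of_le_row (T := T) (i := 0) (Fin.zero_le _)
  exact mem_image.2 ⟨k, mem_univ k, hk⟩

theorem rowLen_le_rowLen_zero (r : Fin n) : rowLen n T r ≤ rowLen n T 0 := by
  choose top _ htop_row htop_col using
    fun i => exists_le_of_le_row (T := T) (i := i) (Fin.zero_le _)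
  refine card_le_card_of_injOn top (fun i _ => mem_filter.2 ⟨mem_univ _, htop_row i⟩)
    fun i hi j hj hij => ?_
  have row_eq : T.row i = T.row j := (mem_filter.1 hi).2.trans (mem_filter.1 hj).2.symm
  have col_eq : T.col i = T.col j := by rw [← htop_col i, hij, htop_col j]
  exact T.2.1 (Prod.ext row_eq col_eq)

theorem sup_rowMult : (rowMult n T).sup = rowLen n T 0 := by
  apply le_antisymm
  · rw [Multiset.sup_le]
    intro b hb
    obtain ⟨r, -, rfl⟩ := Multiset.mem_map.1 (Multiset.mem_of_mem_filter hb)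
    exact T.rowLen_le_rowLen_zero r
  · exact Multiset.le_sup <| Multiset.mem_filter.2
      ⟨Multiset.mem_map_of_mem _ (mem_univ_val 0), T.rowLen_pos_iff.2 T.zero_mem_image_row⟩

theorem card_row_ne_zero_add_one : #{i | T.row i ≠ 0} + 1 = n - ((rowMult n T).sup - 1) := by
  have total : rowLen n T 0 + #{i | T.row i ≠ 0} = n :=
    (card_filter_add_card_filter_not _).trans (card_fin n)
  have pos : 0 < rowLen n T 0 := T.rowLen_pos_iff.2 T.zero_mem_image_row
  rw [sup_rowMult]
  omega

end RowLengths

section Maximum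

variable [NeZero n]

theorem descentBottoms_subset : T.descentBottoms ⊆ univ.filter fun i => T.row i ≠ 0 := fun _ hi =>
  mem_filter.2 ⟨mem_univ _, ((Fin.zero_le _).trans_lt (mem_descentBottoms.1 hi)).ne'⟩

variable {T} in
theorem descentBottoms_eq_of_monotone_col (hT : Monotone T.col) :
    T.descentBottoms = univ.filter fun i => T.row i ≠ 0 := by
  refine T.descentBottoms_subset.antisymm fun i hi => mem_descentBottoms.2 ?_
  obtain ⟨k, hki, -, hcol⟩ := exists_lt_of_lt_row (Fin.pos_iff_ne_zero.2 (mem_filter.1 hi).2)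
  -- The columns of `k ≤ pred i < i` are squeezed between equal values.
  have col_pred : T.col i = T.col (Order.pred i) :=
    (hcol.symm.trans_le (hT (Order.le_pred_of_lt hki))).antisymm (hT (Order.pred_le i))
  by_contra! hle
  exact (Order.pred_lt_of_not_isMin (not_isMin_of_lt hki)).not_ge
    (le_of_row_le_of_col_eq hle col_pred)

theorem length_desComp_le : (desComp n T).length ≤ n - ((rowMult n T).sup - 1) := by
  rw [length_desComp, ← card_row_ne_zero_add_one]
  exact Nat.succ_le_succ (card_le_card T.descentBottoms_subset)

variable {T} in
theorem length_desComp_of_monotone_col (hT : Monotone T.col) :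
    (desComp n T).length = n - ((rowMult n T).sup - 1) := by
  rw [length_desComp, ← card_row_ne_zero_add_one, descentBottoms_eq_of_monotone_col hT]

end Maximum

section Minimum

variable {T} in
theorem injOn_row_descentBottoms_of_monotone_row (hT : Monotone T.row) :
    Set.InjOn T.row T.descentBottoms := by
  have strictMonoOn : StrictMonoOn T.row T.descentBottoms := fun i _ j hj hij =>
    (hT (Order.le_pred_of_lt hij)).trans_lt (mem_descentBottoms.1 hj)
  exact strictMonoOn.injOn

variable [NeZero n]

theorem image_row_descentBottoms :
    T.descentBottoms.image T.row = (univ.image T.row).erase 0 := by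
  ext r
  simp only [mem_image, mem_erase, mem_univ, true_and]
  constructor
  · rintro ⟨i, hi, rfl⟩
    exact ⟨(mem_filter.1 (T.descentBottoms_subset hi)).2, i, rfl⟩
  · rintro ⟨hr, hrow⟩
    -- The smallest entry `j` of row `r` is a descent bottom: otherwise some `k ≤ pred j` would
    -- lie in row `r`.
    obtain ⟨j, rfl, hmin⟩ := WellFounded.has_min (wellFounded_lt (α := Fin n))
      {i | T.row i = r} hrow
    refine ⟨j, mem_descentBottoms.2 ?_, rfl⟩
    by_contra! hle
    obtain ⟨k, hk, hkrow, -⟩ := exists_le_of_le_row hle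
    obtain ⟨l, hl, -⟩ := exists_lt_of_lt_row (Fin.pos_iff_ne_zero.2 hr)
    exact hmin k hkrow (hk.trans_lt (Order.pred_lt_of_not_isMin (not_isMin_of_lt hl)))

theorem card_rowMult_eq : (rowMult n T).card = #(T.descentBottoms.image T.row) + 1 := by
  rw [card_rowMult, image_row_descentBottoms, card_erase_add_one T.zero_mem_image_row]

theorem card_rowMult_le_length_desComp : (rowMult n T).card ≤ (desComp n T).length := by
  rw [card_rowMult_eq, length_desComp]
  exact Nat.succ_le_succ card_image_le

variable {T} in
theorem length_desComp_of_monotone_row (hT : Monotone T.row) :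
    (desComp n T).length = (rowMult n T).card := by
  rw [card_rowMult_eq, length_desComp,
    card_image_of_injOn (injOn_row_descentBottoms_of_monotone_row hT)]

end Minimum

end SYT

theorem exists_equiv_fin_le_iff_le {α β : Type*} [LinearOrder α] [Fintype β] {f : β → α}
    (hf : Function.Injective f) {n : ℕ} (hn : Fintype.card β = n) :
    ∃ e : Fin n ≃ β, ∀ i j, f (e i) ≤ f (e j) ↔ i ≤ j := by
  let _ : LinearOrder β := LinearOrder.lift' f hf
  let e := Fintype.orderIsoFinOfCardEq β hn
  exact ⟨e.toEquiv, fun _ _ => e.le_iff_le⟩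

theorem exists_linearExtension_monotone_comp {α β : Type*} [LinearOrder α] [PartialOrder β]
    [Fintype β] {key : β → α} (hkey : Monotone key) {n : ℕ} (hn : Fintype.card β = n) :
    ∃ e : Fin n ≃ β, Monotone e.symm ∧ Monotone (key ∘ e) := by
  -- Sort `β` by `key`, breaking ties by an arbitrary linear extension of its order.
  let f : β → α ×ₗ LinearExtension β := fun b => toLex (key b, toLinearExtension b)
  have f_monotone : Monotone f :=
    Prod.Lex.toLex_mono.comp (hkey.prodMk toLinearExtension.monotone)
  have f_injective : Function.Injective f := fun _ _ h => congrArg (fun x => (ofLex x).2) h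
  obtain ⟨e, he⟩ := exists_equiv_fin_le_iff_le f_injective hn
  refine ⟨e, fun b c hbc => ?_, fun i j hij => ?_⟩
  · rw [← he, e.apply_symm_apply, e.apply_symm_apply]
    exact f_monotone hbc
  · exact Prod.Lex.monotone_fst_ofLex ((he i j).2 hij)

section YoungDiagram

theorem card_eq_of_equiv_cells {n : ℕ} {μ : YoungDiagram} (e : Fin n ≃ μ.cells) : μ.card = n := by
  simpa using (Fintype.card_congr e).symm

theorem colLen_le_card (μ : YoungDiagram) (j : ℕ) : μ.colLen j ≤ μ.card := by
  rw [μ.colLen_eq_card]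
  exact card_filter_le _ _

theorem rowLen_le_card (μ : YoungDiagram) (i : ℕ) : μ.rowLen i ≤ μ.card := by
  rw [μ.rowLen_eq_card]
  exact card_filter_le _ _

theorem sum_rowLens (μ : YoungDiagram) : μ.rowLens.sum = μ.card := by
  have row_lt : ∀ c ∈ μ.cells, c.1 ∈ range (μ.colLen 0) := fun c hc =>
    mem_range.2 <| μ.mem_iff_lt_colLen.1 <|
      μ.up_left_mem le_rfl (Nat.zero_le _) ((μ.mem_cells _).1 hc)
  calc μ.rowLens.sum = ∑ i ∈ range (μ.colLen 0), μ.rowLen i := rfl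
    _ = ∑ i ∈ range (μ.colLen 0), #{c ∈ μ.cells | c.1 = i} :=
      sum_congr rfl fun _ _ => μ.rowLen_eq_card
    _ = μ.card := (card_eq_sum_card_fiberwise row_lt).symm

theorem filter_pos_map_rowLen_range (μ : YoungDiagram) {n : ℕ} (hn : μ.colLen 0 ≤ n) :
    ((Multiset.range n).map μ.rowLen).filter (0 < ·) = μ.rowLens := by
  have nonempty_rows : {i ∈ range n | 0 < μ.rowLen i} = range (μ.colLen 0) := by
    ext i
    rw [mem_filter, mem_range, mem_range, ← μ.mem_iff_lt_rowLen, μ.mem_iff_lt_colLen]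
    exact and_iff_right_of_imp (·.trans_le hn)
  rw [Multiset.filter_map]
  exact congrArg (fun s : Finset ℕ => s.val.map μ.rowLen) nonempty_rows

theorem exists_youngDiagram_rowLens_eq_parts {n : ℕ} (p : n.Partition) :
    ∃ μ : YoungDiagram, (μ.rowLens : Multiset ℕ) = p.parts ∧ μ.card = n := by
  let w := p.parts.sort (· ≥ ·)
  have w_parts : (w : Multiset ℕ) = p.parts := Multiset.sort_eq _ _
  have w_pos : ∀ x ∈ w, 0 < x := fun x hx => p.parts_pos ((Multiset.mem_sort _).1 hx)
  let μ := YoungDiagram.ofRowLens w (Multiset.pairwise_sort _ _).sortedGE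
  have rowLens_eq : μ.rowLens = w := YoungDiagram.rowLens_ofRowLens_eq_self w_pos
  refine ⟨μ, by rw [rowLens_eq, w_parts], ?_⟩
  rw [← sum_rowLens, rowLens_eq, ← Multiset.sum_coe, w_parts, p.parts_sum]

end YoungDiagram

namespace SYT

section LinearExtension

variable {n : ℕ} {μ : YoungDiagram} (e : Fin n ≃ μ.cells)

theorem cell_fst_lt (i : Fin n) : (e i).1.1 < n :=
  card_eq_of_equiv_cells e ▸
    (μ.mem_iff_lt_colLen.1 ((μ.mem_cells _).1 (e i).2)).trans_le (colLen_le_card μ _)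

theorem cell_snd_lt (i : Fin n) : (e i).1.2 < n :=
  card_eq_of_equiv_cells e ▸
    (μ.mem_iff_lt_rowLen.1 ((μ.mem_cells _).1 (e i).2)).trans_le (rowLen_le_card μ _)

/-- The standard Young tableau of shape `μ` whose `i`-th entry sits in the cell `e i`, for an
enumeration `e` of the cells that is a linear extension of their componentwise order. -/
def ofLinearExtension (he : Monotone e.symm) : SYT n :=
  ⟨fun i => (⟨(e i).1.1, cell_fst_lt e i⟩, ⟨(e i).1.2, cell_snd_lt e i⟩), by
    refine ⟨fun i j hij => ?_, fun i a b ha hb => ?_, fun i j hij => ?_⟩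
    · simpa [Fin.ext_iff, ← Prod.ext_iff, ← Subtype.ext_iff] using hij
    · have hab : ((a : ℕ), (b : ℕ)) ∈ μ.cells :=
        (μ.mem_cells _).2 (μ.up_left_mem ha hb ((μ.mem_cells _).1 (e i).2))
      exact ⟨e.symm ⟨_, hab⟩, by simp⟩
    · have hlt : e i < e j := Prod.lt_iff.2 <| hij.elim
        (fun h => Or.inr ⟨(congrArg Fin.val h.1).le, h.2⟩)
        (fun h => Or.inl ⟨h.2, (congrArg Fin.val h.1).le⟩)
      simpa using he.strictMono_of_injective e.symm.injective hlt⟩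

variable {e} (he : Monotone e.symm)

theorem rowLen_ofLinearExtension (r : Fin n) :
    rowLen n (ofLinearExtension e he) r = μ.rowLen r := by
  rw [μ.rowLen_eq_card]
  refine card_bij (fun i _ => (e i).1) (fun i hi => ?_) (fun i _ j _ hij => ?_) fun c hc => ?_
  · exact μ.mem_row_iff.2 ⟨(μ.mem_cells _).1 (e i).2, congrArg Fin.val (mem_filter.1 hi).2⟩
  · exact e.injective (Subtype.ext hij)
  · obtain ⟨hcμ, hcr⟩ := μ.mem_row_iff.1 hc
    exact ⟨e.symm ⟨c, (μ.mem_cells _).2 hcμ⟩,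
      mem_filter.2 ⟨mem_univ _, Fin.ext (by simpa [ofLinearExtension] using hcr)⟩, by simp⟩

theorem rowMult_ofLinearExtension :
    rowMult n (ofLinearExtension e he) = μ.rowLens := by
  have map_rowLen : (univ : Finset (Fin n)).val.map (rowLen n (ofLinearExtension e he)) =
      (Multiset.range n).map μ.rowLen := by
    rw [funext (rowLen_ofLinearExtension he), Fin.univ_val_map, List.ofFn_eq_map,
      ← Function.comp_def μ.rowLen, ← List.map_map, List.map_coe_finRange_eq_range,
      ← Multiset.map_coe, Multiset.coe_range]
  rw [rowMult, map_rowLen, filter_pos_map_rowLen_range]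
  exact (colLen_le_card μ 0).trans_eq (card_eq_of_equiv_cells e)

end LinearExtension

theorem exists_rowMult_eq_parts_monotone {n : ℕ} (p : n.Partition) {α : Type*} [LinearOrder α]
    {key : ℕ × ℕ → α} (hkey : Monotone key) :
    ∃ T : SYT n, rowMult n T = p.parts ∧ Monotone fun i => key (T.row i, T.col i) := by
  obtain ⟨μ, hμ, hcard⟩ := exists_youngDiagram_rowLens_eq_parts p
  obtain ⟨e, he, hkey_e⟩ := exists_linearExtension_monotone_comp
    (hkey.comp (Subtype.mono_coe (· ∈ μ.cells))) ((Fintype.card_coe _).trans hcard)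
  exact ⟨ofLinearExtension e he, (rowMult_ofLinearExtension he).trans hμ, hkey_e⟩

end SYT

/-- For a nonempty partition `λ` of `n`, the maximum of `ℓ(des T)` over standard Young
tableaux `T` of shape `λ` is `n - (λ₁ - 1)`, and the minimum is `ℓ(λ)`. -/
theorem stmt15 (n : ℕ) (hn : 0 < n) (p : n.Partition) :
    IsGreatest {k | ∃ T : SYT n, rowMult n T = p.parts ∧ (desComp n T).length = k}
      (n - (p.parts.sup - 1)) ∧
    IsLeast {k | ∃ T : SYT n, rowMult n T = p.parts ∧ (desComp n T).length = k}
      p.parts.card := by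
  have : NeZero n := ⟨hn.ne'⟩
  obtain ⟨C, hC, col_mono⟩ := SYT.exists_rowMult_eq_parts_monotone p monotone_snd
  obtain ⟨R, hR, row_mono⟩ := SYT.exists_rowMult_eq_parts_monotone p monotone_fst
  refine ⟨⟨⟨C, hC, ?_⟩, ?_⟩, ⟨R, hR, ?_⟩, ?_⟩
  · rw [← hC, SYT.length_desComp_of_monotone_col col_mono]
  · rintro _ ⟨T, hT, rfl⟩
    exact hT ▸ T.length_desComp_le
  · rw [← hR, SYT.length_desComp_of_monotone_row row_mono]
  · rintro _ ⟨T, hT, rfl⟩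
    exact hT ▸ T.card_rowMult_le_length_desComp
end
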